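/- Let G be a k-connected graph on n vertices with k ≥ 2. Then the path eccentricity of G is at most (n + k)/(3k + 2). -/

import Mathlib

open SimpleGraph

variable {V : Type*} [Fintype V] [DecidableEq V]

/-- Distance from a vertex `u` to the vertex set of a walk `P`. -/
noncomputable def walkDist (G : SimpleGraph V) {a b : V} (P : G.Walk a b) (u : V) : ℕ :=
  P.support.toFinset.inf' ⟨a, List.mem_toFinset.mpr P.start_mem_support⟩ (fun x => G.dist u x)

/-- Eccentricity of a walk: max distance from any vertex of `G` to the walk. -/
noncomputable def eccW (G : SimpleGraph V) {a b : V} (P : G.Walk a b) : ℕ :=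
  Finset.univ.sup (walkDist G P)

/-- Path eccentricity of a graph. -/
noncomputable def pe (G : SimpleGraph V) : ℕ :=
  sInf {m | ∃ (a b : V) (P : G.Walk a b), P.IsPath ∧ eccW G P = m}

/-- `P` is a longest path in `G`. -/
def IsLongestPath (G : SimpleGraph V) {a b : V} (P : G.Walk a b) : Prop :=
  P.IsPath ∧ ∀ (c d : V) (Q : G.Walk c d), Q.IsPath → Q.length ≤ P.length

/-- `G` is `k`-connected. -/
def KConnected (k : ℕ) (G : SimpleGraph V) : Prop :=
  k + 1 ≤ Fintype.card V ∧
    ∀ S : Finset V, S.card < k → (G.induce ((↑S : Set V)ᶜ)).Connected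

/-!
The bound already holds for the eccentricity `d ≥ 1` of any longest path `P`. Take `u` at distance
`d` from `P`. Since `P` has at least `k` vertices, a fan of `k` paths joins `u` to `P`, each of
length at least `d`. Joining two of these legs at `u` gives a detour of length at least `2d` between
two vertices of `P`; as `P` is longest, the vertices where the fan lands are at distance at least
`2d` from each other along `P`, and at distance at least `2d - 1` from both ends of `P`. So `P` has
at least `2d(k + 1) - 1` vertices, and `u` and the interiors of the legs contribute at least
`1 + k(d - 1)` more.

The fan comes from Hall's theorem: choose injectively `k` neighbours of `u` and, for every other
vertex outside the target set, a vertex of its closed neighbourhood (a vertex on no leg may choose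
itself). Hall's condition is the absence of small separators, and following the choices from the
`k` neighbours gives the legs.
-/

section

open Finset

variable {α : Type*} {G : SimpleGraph α}

section Connectivity

variable [Fintype α] {k : ℕ}

theorem KConnected.le_card_of_separates (hG : KConnected k G) {X B : Set α} {S : Finset α} {x : α}
    (hx : x ∈ X) (hxS : x ∉ S) (hB : k ≤ B.ncard) (hXB : Disjoint X B)
    (hS : ∀ v ∈ X, ∀ w ∉ X, G.Adj v w → w ∈ S) : k ≤ #S := by
  by_contra! hlt
  obtain ⟨b, hb, hbS⟩ : ∃ b ∈ B, b ∉ (S : Set α) :=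
    Set.exists_mem_notMem_of_ncard_lt_ncard (by rw [Set.ncard_coe_finset]; omega)
  obtain ⟨p⟩ := (hG.2 S hlt).preconnected ⟨x, hxS⟩ ⟨b, hbS⟩
  obtain ⟨d, -, hfst, hsnd⟩ := p.exists_boundary_dart (Subtype.val ⁻¹' X) hx
    (hXB.notMem_of_mem_right hb)
  exact d.snd.2 (hS _ hfst _ hsnd d.adj)

theorem KConnected.le_degree (hG : KConnected k G) (v : α) [Fintype (G.neighborSet v)] :
    k ≤ G.degree v := by
  refine hG.le_card_of_separates (Set.mem_singleton v) (B := {v}ᶜ) (by simp) ?_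
    disjoint_compl_right (by simp)
  rw [Set.ncard_compl, Set.ncard_singleton, Nat.card_eq_fintype_card]
  exact Nat.le_sub_one_of_lt hG.1

theorem KConnected.add_card_le_card_of_neighbors_subset (hG : KConnected k G) {u : α} {B : Set α}
    (hu : u ∉ B) (hB : k ≤ B.ncard) {W N : Finset α} (hWB : ∀ v ∈ W, v ∉ B) (hWN : W ⊆ N)
    (huN : u ∉ N) (hNu : ∀ w, G.Adj u w → w ∈ N)
    (hNW : ∀ v ∈ W, ∀ w ≠ u, G.Adj v w → w ∈ N) : k + #W ≤ #N := by
  classical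
  have hboundary : k ≤ #(N \ W) := by
    refine hG.le_card_of_separates (X := insert u W) (x := u) (by simp) (by simp [huN]) hB ?_ ?_
    · exact Set.disjoint_left.2 fun v hv => hv.elim (fun h => h ▸ hu) (hWB v)
    · intro v hv w hw hvw
      simp only [Set.mem_insert_iff, mem_coe, not_or] at hv hw
      refine mem_sdiff.2 ⟨?_, hw.2⟩
      rcases hv with rfl | hv
      · exact hNu w hvw
      · exact hNW v hv w hw.1 hvw
  have := card_sdiff_add_card_eq_card hWN
  omega

theorem KConnected.exists_injective_next (hG : KConnected k G) {u : α} {B : Set α} (hu : u ∉ B)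
    (hB : k ≤ B.ncard) :
    ∃ g : Fin k ⊕ ↥(insert u B)ᶜ → α, g.Injective ∧ (∀ i, G.Adj u (g (.inl i))) ∧
      ∀ v, g (.inr v) ≠ u ∧ (g (.inr v) = v ∨ G.Adj v (g (.inr v))) := by
  classical
  let r : Fin k ⊕ ↥(insert u B)ᶜ → α → Prop :=
    Sum.elim (fun _ w => G.Adj u w) (fun v w => w ≠ u ∧ (w = v ∨ G.Adj v w))
  have hall (A : Finset (Fin k ⊕ ↥(insert u B)ᶜ)) : #A ≤ #{w | ∃ x ∈ A, r x w} := by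
    set N : Finset α := {w | ∃ x ∈ A, r x w} with hN
    set W : Finset α := A.toRight.map (Function.Embedding.subtype _) with hW
    have hmemW {v : α} : v ∈ W ↔ ∃ h : v ∈ (insert u B)ᶜ, Sum.inr ⟨v, h⟩ ∈ A := by simp [hW]
    have hWN : W ⊆ N := fun v hv => by
      obtain ⟨h, hA⟩ := hmemW.1 hv
      exact mem_filter.2 ⟨mem_univ v, _, hA, fun hvu => h (.inl hvu), .inl rfl⟩
    have hcard : #A.toLeft + #W = #A := by rw [hW, card_map, card_toLeft_add_card_toRight]
    rcases A.toLeft.eq_empty_or_nonempty with hempty | ⟨i, hi⟩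
    · have := card_le_card hWN
      rw [hempty, card_empty] at hcard
      omega
    · have hle : #A.toLeft ≤ k := by simpa using card_le_univ A.toLeft
      have : k + #W ≤ #N := by
        refine hG.add_card_le_card_of_neighbors_subset hu hB ?_ hWN ?_ ?_ ?_
        · exact fun v hv hvB => (hmemW.1 hv).1 (.inr hvB)
        · simp [hN, r]
        · exact fun w hw => mem_filter.2 ⟨mem_univ w, _, mem_toLeft.1 hi, hw⟩
        · intro v hv w hwu hvw
          obtain ⟨h, hA⟩ := hmemW.1 hv
          exact mem_filter.2 ⟨mem_univ w, _, hA, hwu, .inr hvw⟩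
      omega
  obtain ⟨g, hg, hgr⟩ := (Fintype.all_card_le_filter_rel_iff_exists_injective r).1 hall
  exact ⟨g, hg, fun i => hgr (.inl i), fun v => hgr (.inr v)⟩

theorem KConnected.exists_injOn_next (hG : KConnected k G) {u : α} {B : Set α} (hu : u ∉ B)
    (hB : k ≤ B.ncard) :
    ∃ (a : Fin k → α) (f : α → α), a.Injective ∧ (∀ i, G.Adj u (a i)) ∧
      Set.InjOn f (insert u B)ᶜ ∧ (∀ v ∉ insert u B, ∀ i, f v ≠ a i) ∧
      ∀ v ∉ insert u B, f v ≠ u ∧ (f v = v ∨ G.Adj v (f v)) := by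
  classical
  obtain ⟨g, hg, hgu, hgv⟩ := hG.exists_injective_next hu hB
  let f (v : α) : α := if h : v ∈ (insert u B)ᶜ then g (.inr ⟨v, h⟩) else v
  have hf {v : α} (h : v ∉ insert u B) : f v = g (.inr ⟨v, h⟩) := dif_pos h
  refine ⟨fun i => g (.inl i), f, hg.comp Sum.inl_injective, hgu, ?_, ?_, ?_⟩
  · intro v hv w hw hvw
    rw [hf hv, hf hw] at hvw
    simpa using hg hvw
  · intro v hv i hvi
    rw [hf hv] at hvi
    simpa using hg hvi
  · intro v hv
    rw [hf hv]
    exact hgv ⟨v, hv⟩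

end Connectivity

section Orbits

variable {f : α → α} {s : Set α}

theorem eq_of_iterate_eq_iterate {ι : Type*} {a : ι → α} (hf : s.InjOn f) (ha : a.Injective)
    (has : ∀ v ∈ s, ∀ i, f v ≠ a i) {i j : ι} {m n : ℕ} (hm : ∀ r < m, f^[r] (a i) ∈ s)
    (hn : ∀ r < n, f^[r] (a j) ∈ s) (h : f^[m] (a i) = f^[n] (a j)) : i = j ∧ m = n := by
  induction m generalizing n with
  | zero =>
    cases n with
    | zero => exact ⟨ha h, rfl⟩
    | succ n =>
      rw [Function.iterate_succ_apply'] at h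
      exact absurd h.symm (has _ (hn n n.lt_succ_self) i)
  | succ m ih =>
    rw [Function.iterate_succ_apply'] at h
    cases n with
    | zero => exact absurd h (has _ (hm m m.lt_succ_self) j)
    | succ n =>
      rw [Function.iterate_succ_apply'] at h
      have := ih (fun r hr => hm r (hr.trans m.lt_succ_self))
        (fun r hr => hn r (hr.trans n.lt_succ_self))
        (hf (hm m m.lt_succ_self) (hn n n.lt_succ_self) h)
      simpa using this

theorem exists_iterate_notMem [Finite α] {a : α} (hf : s.InjOn f) (has : ∀ v ∈ s, f v ≠ a) :
    ∃ n, f^[n] a ∉ s ∧ ∀ m < n, f^[m] a ∈ s := by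
  classical
  have hex : ∃ n, f^[n] a ∉ s := by
    by_contra! hall
    exact not_injective_infinite_finite (fun n => f^[n] a) fun m n hmn =>
      (eq_of_iterate_eq_iterate (a := fun _ : Unit => a) (i := ()) (j := ()) hf
        (Function.injective_of_subsingleton _) (fun v hv _ => has v hv)
        (fun r _ => hall r) (fun r _ => hall r) hmn).2
  exact ⟨Nat.find hex, Nat.find_spec hex, fun m hm => not_not.1 (Nat.find_min hex hm)⟩

theorem exists_walk_iterate {a : α} {n : ℕ}
    (h : ∀ m < n, f (f^[m] a) = f^[m] a ∨ G.Adj (f^[m] a) (f (f^[m] a))) :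
    ∃ p : G.Walk a (f^[n] a), ∀ v ∈ p.support, ∃ m ≤ n, f^[m] a = v := by
  induction n with
  | zero => exact ⟨.nil, by simp⟩
  | succ n ih =>
    obtain ⟨p, hp⟩ := ih fun m hm => h m (hm.trans n.lt_succ_self)
    have hp' : ∀ v ∈ p.support, ∃ m ≤ n + 1, f^[m] a = v := fun v hv =>
      (hp v hv).imp fun m hm => ⟨hm.1.trans n.le_succ, hm.2⟩
    rw [Function.iterate_succ_apply']
    rcases h n n.lt_succ_self with heq | hadj
    · exact ⟨p.copy rfl heq.symm, by simpa using hp'⟩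
    · refine ⟨p.concat hadj, fun v hv => ?_⟩
      rw [Walk.support_concat, List.mem_append, List.mem_singleton] at hv
      rcases hv with hv | rfl
      · exact hp' v hv
      · exact ⟨n + 1, le_rfl, Function.iterate_succ_apply' f n a⟩

end Orbits

/-- A fan in `G` from the apex `u` to the set `B`: a family of paths (legs) starting at `u` that
pairwise share no other vertex, each meeting `B` only in its last vertex (its foot). -/
structure Fan (G : SimpleGraph α) (ι : Type*) (u : α) (B : Set α) where
  foot : ι → α
  leg (i : ι) : G.Walk u (foot i)
  isPath_leg (i : ι) : (leg i).IsPath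
  foot_mem (i : ι) : foot i ∈ B
  eq_foot {i : ι} {v : α} : v ∈ (leg i).support → v ∈ B → v = foot i
  eq_apex {i j : ι} {v : α} : i ≠ j → v ∈ (leg i).support → v ∈ (leg j).support → v = u

theorem KConnected.nonempty_fan [Fintype α] {k : ℕ} (hG : KConnected k G) {u : α} {B : Set α}
    (hu : u ∉ B) (hB : k ≤ B.ncard) : Nonempty (Fan G (Fin k) u B) := by
  classical
  obtain ⟨a, f, ha, hua, hf, hfa, hstep⟩ := hG.exists_injOn_next hu hB
  choose n hexit hmin using fun i => exists_iterate_notMem hf fun v hv => hfa v hv i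
  have hne (i : Fin k) {m : ℕ} (hm : m ≤ n i) : f^[m] (a i) ≠ u := by
    cases m with
    | zero => exact (hua i).ne'
    | succ m =>
      rw [Function.iterate_succ_apply']
      exact (hstep _ (hmin i m hm)).1
  choose p hp using fun i => exists_walk_iterate fun m hm => (hstep _ (hmin i m hm)).2
  let q (i : Fin k) : G.Walk u (f^[n i] (a i)) := (Walk.cons (hua i) (p i)).bypass
  have hq {i : Fin k} {v : α} (hv : v ∈ (q i).support) : v = u ∨ ∃ m ≤ n i, f^[m] (a i) = v := by
    have := Walk.support_bypass_subset_support _ hv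
    rw [Walk.support_cons, List.mem_cons] at this
    exact this.imp_right (hp i v)
  refine ⟨fun i => f^[n i] (a i), q, fun i => Walk.bypass_isPath _, fun i => ?_, ?_, ?_⟩
  · exact (not_not.1 (hexit i)).resolve_left (hne i le_rfl)
  · intro i v hv hvB
    obtain rfl | ⟨m, hm, rfl⟩ := hq hv
    · exact absurd hvB hu
    · obtain hlt | rfl := hm.lt_or_eq
      · exact absurd (.inr hvB) (hmin i m hlt)
      · rfl
  · intro i j v hij hi hj
    obtain rfl | ⟨m, hm, rfl⟩ := hq hi
    · rfl
    · obtain h | ⟨m', hm', h⟩ := hq hj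
      · exact h
      · exact absurd (eq_of_iterate_eq_iterate hf ha hfa
          (fun r hr => hmin i r (hr.trans_le hm)) (fun r hr => hmin j r (hr.trans_le hm'))
          h.symm).1 hij

theorem isPath_append_of_forall_eq {u v w : α} {p : G.Walk u v} {q : G.Walk v w} (hp : p.IsPath)
    (hq : q.IsPath) (h : ∀ x ∈ p.support, x ∈ q.support → x = v) : (p.append q).IsPath := by
  have hvq : v ∉ q.support.tail ∧ q.support.tail.Nodup := by
    have := hq.support_nodup
    rwa [← Walk.cons_tail_support, List.nodup_cons] at this
  rw [Walk.isPath_def, Walk.support_append, List.nodup_append']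
  exact ⟨hp.support_nodup, hvq.2, fun x hx hx' =>
    hvq.1 (h x hx (List.mem_of_mem_tail hx') ▸ hx')⟩

theorem exists_getVert_of_mem_support_take {u v w : α} {p : G.Walk u v} {n : ℕ}
    (hw : w ∈ (p.take n).support) : ∃ m ≤ n, m ≤ p.length ∧ p.getVert m = w := by
  obtain ⟨m, rfl, hm⟩ := Walk.mem_support_iff_exists_getVert.1 hw
  rw [Walk.take_length, le_inf_iff] at hm
  exact ⟨m, hm.1, hm.2, by rw [Walk.take_getVert, inf_eq_right.2 hm.1]⟩

theorem exists_getVert_of_mem_support_drop {u v w : α} {p : G.Walk u v} {n : ℕ}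
    (hn : n ≤ p.length) (hw : w ∈ (p.drop n).support) :
    ∃ m, n ≤ m ∧ m ≤ p.length ∧ p.getVert m = w := by
  obtain ⟨m, rfl, hm⟩ := Walk.mem_support_iff_exists_getVert.1 hw
  rw [Walk.drop_length] at hm
  exact ⟨n + m, by omega, by omega, (Walk.drop_getVert ..).symm⟩

namespace Fan

variable {ι : Type*} {u : α} {B : Set α} (F : Fan G ι u B) {i j : ι}

theorem foot_ne_foot (hu : u ∉ B) (hij : i ≠ j) : F.foot i ≠ F.foot j := by
  intro h
  have hapex : F.foot i = u :=
    F.eq_apex hij (F.leg i).end_mem_support (by simp [h])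
  exact hu (hapex ▸ F.foot_mem i)

/-- The detour from the foot of leg `i` to the foot of leg `j` through the apex. -/
def detour (i j : ι) : G.Walk (F.foot i) (F.foot j) :=
  (F.leg i).reverse.append (F.leg j)

theorem isPath_detour (hij : i ≠ j) : (F.detour i j).IsPath :=
  isPath_append_of_forall_eq (F.isPath_leg i).reverse (F.isPath_leg j) fun _ hi hj =>
    F.eq_apex hij (by simpa using hi) hj

theorem length_detour : (F.detour i j).length = (F.leg i).length + (F.leg j).length := by
  simp [detour]

theorem eq_foot_or_eq_foot {v : α} (hv : v ∈ (F.detour i j).support) (hvB : v ∈ B) :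
    v = F.foot i ∨ v = F.foot j := by
  rw [detour, Walk.mem_support_append_iff, Walk.support_reverse, List.mem_reverse] at hv
  exact hv.imp (F.eq_foot · hvB) (F.eq_foot · hvB)

theorem card_mul_add_ncard_lt_card [Fintype ι] [Fintype α] (hu : u ∉ B) {d : ℕ}
    (hd : ∀ i, d < (F.leg i).length) : Fintype.card ι * d + B.ncard < Fintype.card α := by
  classical
  let I (i : ι) : Finset α := ((F.leg i).support.toFinset.erase u).erase (F.foot i)
  have hmemI {i : ι} {v : α} (hv : v ∈ I i) :
      v ∈ (F.leg i).support ∧ v ≠ u ∧ v ≠ F.foot i := by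
    simp only [I, mem_erase, List.mem_toFinset] at hv
    exact ⟨hv.2.2, hv.2.1, hv.1⟩
  have hcardI (i : ι) : d ≤ #(I i) := by
    have hfoot : F.foot i ≠ u := fun h => hu (h ▸ F.foot_mem i)
    rw [card_erase_of_mem (by simp [hfoot]), card_erase_of_mem (by simp),
      List.toFinset_card_of_nodup (F.isPath_leg i).support_nodup, Walk.length_support]
    have := hd i
    omega
  have hdisj : ((univ : Finset ι) : Set ι).PairwiseDisjoint I := fun i _ j _ hij =>
    disjoint_left.2 fun v hi hj =>
      (hmemI hi).2.1 (F.eq_apex hij (hmemI hi).1 (hmemI hj).1)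
  have hsub : ((univ.biUnion I : Finset α) : Set α) ⊆ (insert u B)ᶜ := by
    intro v hv
    obtain ⟨i, -, hi⟩ := mem_biUnion.1 (mem_coe.1 hv)
    obtain ⟨hleg, hvu, hvfoot⟩ := hmemI hi
    rintro (h | h)
    exacts [hvu h, hvfoot (F.eq_foot hleg h)]
  have hinterior : Fintype.card ι * d ≤ (insert u B)ᶜ.ncard :=
    calc Fintype.card ι * d ≤ ∑ i, #(I i) := by
          simpa using card_nsmul_le_sum univ (fun i => #(I i)) d fun i _ => hcardI i
      _ = #(univ.biUnion I) := (card_biUnion hdisj).symm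
      _ ≤ (insert u B)ᶜ.ncard := by
          rw [← Set.ncard_coe_finset]
          exact Set.ncard_le_ncard hsub
  have := Set.ncard_add_ncard_compl (insert u B)
  rw [Set.ncard_insert_of_notMem hu, Nat.card_eq_fintype_card] at this
  omega

end Fan

theorem card_mul_le_of_pairwise_add_le {ι : Type*} {s : Finset ι} {t : ι → ℕ} {a b m : ℕ}
    (hlow : ∀ i ∈ s, a ≤ t i) (hup : ∀ i ∈ s, t i + m ≤ b)
    (hsep : (s : Set ι).Pairwise fun i j => t i + m ≤ t j ∨ t j + m ≤ t i) :
    #s * m ≤ b - a := by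
  classical
  have hdisj : (s : Set ι).PairwiseDisjoint fun i => Ico (t i) (t i + m) :=
    hsep.imp fun i j h => disjoint_left.2 fun x hi hj => by
      rw [mem_Ico] at hi hj
      omega
  calc #s * m = #(s.biUnion fun i => Ico (t i) (t i + m)) := by simp [card_biUnion hdisj]
    _ ≤ #(Ico a b) := card_le_card <| biUnion_subset.2 fun i hi =>
        Ico_subset_Ico (hlow i hi) (hup i hi)
    _ = b - a := Nat.card_Ico a b

namespace IsLongestPath

variable {x y : α} {P : G.Walk x y}

theorem reverse (hP : IsLongestPath G P) : IsLongestPath G P.reverse :=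
  ⟨hP.1.reverse, by simpa using hP.2⟩

theorem degree_le_length (hP : IsLongestPath G P) [Fintype (G.neighborSet x)] :
    G.degree x ≤ P.length := by
  classical
  have hsub : G.neighborFinset x ⊆ P.support.toFinset.erase x := by
    intro v hv
    rw [mem_neighborFinset] at hv
    by_contra hvP
    have hvP' : v ∉ P.support := by simpa [hv.ne'] using hvP
    have := hP.2 _ _ (Walk.cons hv.symm P) (hP.1.cons hvP')
    simp at this
  calc G.degree x ≤ #(P.support.toFinset.erase x) := card_le_card hsub
    _ = P.length := by
      rw [card_erase_of_mem (by simp), List.toFinset_card_of_nodup hP.1.support_nodup,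
        Walk.length_support, Nat.add_sub_cancel]

theorem length_le (hP : IsLongestPath G P) {w z : α} {t : ℕ} (ht : t ≤ P.length)
    (hz : P.getVert t = z) {Q : G.Walk w z} (hQ : Q.IsPath)
    (hQP : ∀ v ∈ Q.support, v ∈ (P.drop t).support → v = z) : Q.length ≤ t := by
  subst hz
  have := hP.2 _ _ _ (isPath_append_of_forall_eq hQ (hP.1.drop t) hQP)
  rw [Walk.length_append, Walk.drop_length] at this
  omega

theorem add_length_le (hP : IsLongestPath G P) {w z : α} {s t : ℕ} (hst : s ≤ t)
    (ht : t ≤ P.length) (hw : P.getVert s = w) (hz : P.getVert t = z) {Q : G.Walk w z}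
    (hQ : Q.IsPath) (hQP : ∀ v ∈ Q.support, v ∈ P.support → v = w ∨ v = z) :
    s + Q.length ≤ t := by
  subst hw
  have hinj {m n : ℕ} (hm : m ≤ P.length) (hn : n ≤ P.length) (h : P.getVert m = P.getVert n) :
      m = n := hP.1.getVert_injOn hm hn h
  have htake : ((P.take s).append Q).IsPath := by
    refine isPath_append_of_forall_eq (hP.1.take s) hQ fun v hv hvQ => ?_
    obtain ⟨m, hms, hm, rfl⟩ := exists_getVert_of_mem_support_take hv
    refine (hQP _ hvQ (P.getVert_mem_support m)).elim id fun h => ?_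
    obtain rfl : m = t := hinj hm ht (h.trans hz.symm)
    rw [hms.antisymm hst]
  have hdrop : ∀ v ∈ ((P.take s).append Q).support, v ∈ (P.drop t).support → v = z := by
    intro v hv hvdrop
    obtain ⟨m, htm, hm, rfl⟩ := exists_getVert_of_mem_support_drop ht hvdrop
    rcases Walk.mem_support_append_iff _ _ |>.1 hv with hvtake | hvQ
    · obtain ⟨m', hm's, hm', h⟩ := exists_getVert_of_mem_support_take hvtake
      have := hinj hm' hm h
      rw [← hz, show m = t by omega]
    · refine (hQP _ hvQ (P.getVert_mem_support m)).elim (fun h => ?_) id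
      have := hinj hm (hst.trans ht) h
      rw [← hz, show m = t by omega]
  have := hP.length_le ht hz htake hdrop
  rwa [Walk.length_append, Walk.take_length, inf_eq_left.2 (hst.trans ht)] at this

variable {ι : Type*} {u : α} {B : Set α} {i j : ι}

theorem add_length_leg_add_length_leg_le (hP : IsLongestPath G P) (F : Fan G ι u B)
    (hPB : ∀ v ∈ P.support, v ∈ B) (hij : i ≠ j) {s t : ℕ} (hst : s ≤ t) (ht : t ≤ P.length)
    (hsi : P.getVert s = F.foot i) (htj : P.getVert t = F.foot j) :
    s + ((F.leg i).length + (F.leg j).length) ≤ t := by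
  rw [← F.length_detour]
  exact hP.add_length_le hst ht hsi htj (F.isPath_detour hij) fun v hv hvP =>
    F.eq_foot_or_eq_foot hv (hPB v hvP)

theorem length_leg_add_length_leg_le (hP : IsLongestPath G P) (F : Fan G ι u B) (hu : u ∉ B)
    (hPB : ∀ v ∈ P.support, v ∈ B) (hij : i ≠ j) {t : ℕ} (ht : t ≤ P.length)
    (htj : P.getVert t = F.foot j) : (F.leg i).length + (F.leg j).length ≤ t + 1 := by
  have hpath := F.isPath_detour hij
  have hnil : ¬(F.detour i j).Nil := Walk.not_nil_of_ne (F.foot_ne_foot hu hij)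
  have hsupport := Walk.cons_support_tail hnil
  have hstart : F.foot i ∉ (F.detour i j).tail.support := by
    have := hpath.support_nodup
    rw [← hsupport] at this
    exact (List.nodup_cons.1 this).1
  have hlength : (F.detour i j).tail.length ≤ t := by
    refine hP.length_le ht htj hpath.tail fun v hv hvP => ?_
    obtain ⟨m, -, -, hm⟩ := exists_getVert_of_mem_support_drop ht hvP
    have hvB : v ∈ B := hPB v (hm ▸ P.getVert_mem_support m)
    have hvF : v ∈ (F.detour i j).support := by
      rw [← hsupport]
      exact List.mem_cons_of_mem _ hv
    exact (F.eq_foot_or_eq_foot hvF hvB).resolve_left fun h => hstart (h ▸ hv)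
  rw [← F.length_detour, ← Walk.length_tail_add_one hnil]
  exact Nat.succ_le_succ hlength

theorem two_mul_mul_card_add_one_le [Fintype ι] [Nontrivial ι] (hP : IsLongestPath G P)
    (F : Fan G ι u {v | v ∈ P.support}) (hu : u ∉ P.support) {d : ℕ}
    (hd : ∀ i, d ≤ (F.leg i).length) : 2 * d * (Fintype.card ι + 1) ≤ P.length + 2 := by
  choose t ht htl using fun i => Walk.mem_support_iff_exists_getVert.1 (F.foot_mem i)
  have hgap {i j : ι} (hij : i ≠ j) (hle : t i ≤ t j) : t i + 2 * d ≤ t j := by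
    have := hP.add_length_leg_add_length_leg_le F (fun _ => id) hij hle (htl j) (ht i) (ht j)
    have := hd i
    have := hd j
    omega
  have hlow (j : ι) : 2 * d - 1 ≤ t j := by
    obtain ⟨i, hij⟩ := exists_ne j
    have := hP.length_leg_add_length_leg_le F hu (fun _ => id) hij (htl j) (ht j)
    have := hd i
    have := hd j
    omega
  have hup (j : ι) : t j + 2 * d ≤ P.length + 1 := by
    obtain ⟨i, hij⟩ := exists_ne j
    have := hP.reverse.length_leg_add_length_leg_le F hu (by simp) hij
      (t := P.length - t j) (by simp) (by rw [Walk.getVert_reverse, Nat.sub_sub_self (htl j), ht])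
    have := hd i
    have := hd j
    have := htl j
    omega
  have hpack := card_mul_le_of_pairwise_add_le (s := univ) (fun i _ => hlow i) (fun i _ => hup i)
    fun i _ j _ hij => (le_total (t i) (t j)).imp (hgap hij) (hgap hij.symm)
  obtain ⟨i⟩ := Nontrivial.to_nonempty (α := ι)
  have := hlow i
  have := hup i
  rw [card_univ] at hpack
  rw [Nat.mul_add_one, mul_comm (2 * d)]
  omega

end IsLongestPath

theorem exists_isLongestPath [Finite α] [Nonempty α] (G : SimpleGraph α) :
    ∃ (x y : α) (P : G.Walk x y), IsLongestPath G P := by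
  obtain ⟨x, y, P, hP, hmax⟩ := Walk.exists_isPath_forall_isPath_length_le_length G
  exact ⟨x, y, P, hP, hmax⟩

section Eccentricity

variable [Fintype α] [DecidableEq α] {x y : α} {P : G.Walk x y}

theorem exists_forall_eccW_le_dist (P : G.Walk x y) :
    ∃ u, ∀ v ∈ P.support, eccW G P ≤ G.dist u v := by
  obtain ⟨u, -, hu⟩ := exists_mem_eq_sup univ ⟨x, mem_univ x⟩ (walkDist G P)
  exact ⟨u, fun v hv => hu.trans_le (inf'_le _ (List.mem_toFinset.2 hv))⟩

theorem pe_le_eccW (hP : P.IsPath) : pe G ≤ eccW G P :=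
  Nat.sInf_le ⟨x, y, P, hP, rfl⟩

theorem IsLongestPath.eccW_mul_le (hP : IsLongestPath G P) {k : ℕ} (hk : 2 ≤ k)
    (hG : KConnected k G) : eccW G P * (3 * k + 2) ≤ Fintype.card α + k := by
  obtain ⟨u, hu⟩ := exists_forall_eccW_le_dist P
  rcases h : eccW G P with _ | e
  · simp
  rw [h] at hu
  have huP : u ∉ P.support := fun hmem => by simpa using hu u hmem
  have hncard : {v | v ∈ P.support}.ncard = P.length + 1 := by
    rw [← List.coe_toFinset, Set.ncard_coe_finset, List.toFinset_card_of_nodup hP.1.support_nodup,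
      Walk.length_support]
  have hkP : k ≤ P.length := by
    classical exact (hG.le_degree x).trans hP.degree_le_length
  obtain ⟨F⟩ := hG.nonempty_fan (B := {v | v ∈ P.support}) huP (by omega)
  have hleg (i : Fin k) : e + 1 ≤ (F.leg i).length :=
    (hu _ (F.foot_mem i)).trans (dist_le (F.leg i))
  have : Nontrivial (Fin k) := Fin.nontrivial_iff_two_le.2 hk
  have hlength := hP.two_mul_mul_card_add_one_le F huP hleg
  have hcard := F.card_mul_add_ncard_lt_card huP hleg
  rw [Fintype.card_fin] at hlength hcard
  linarith

end Eccentricity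

end

theorem stmt5 (G : SimpleGraph V) (k : ℕ) (hk : 2 ≤ k) (hG : KConnected k G) :
    (pe G : ℝ) ≤ ((Fintype.card V : ℝ) + k) / (3 * k + 2) := by
  have : Nonempty V := Fintype.card_pos_iff.1 (Nat.zero_lt_of_lt hG.1)
  obtain ⟨x, y, P, hP⟩ := exists_isLongestPath G
  have hecc : eccW G P * (3 * k + 2) ≤ Fintype.card V + k := hP.eccW_mul_le hk hG
  have hpe : pe G * (3 * k + 2) ≤ Fintype.card V + k :=
    (Nat.mul_le_mul_right _ (pe_le_eccW hP.1)).trans hecc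
  rw [le_div_iff₀ (by positivity)]
  exact_mod_cast hpe
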